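/- arXiv:2002.05367 — 2 statements merged into one kernel-verified Lean document; each statement's English description precedes it below -/
import Mathlib

section
/- Let S ⊆ Y = P^{n_1} × ... × P^{n_k} be a nondegenerate circuit with #S = 5. Then one of the following cases occurs: (1) k = 1 and n_1 = 3; (2) k = 2 and n_1 = n_2 = 1; (3) k = 2 and n_1 + n_2 = 3; (4) k = 3 and n_1 = n_2 = n_3 = 1. -/
open scoped LinearAlgebra.Projectivization
open Projectivization

/-- The multiprojective space `Y = P^{n 0} × ... × P^{n (k-1)}` over `K`,
where `P^m = P(K^{m+1})`. -/
abbrev MultiProj (K : Type*) [Field K] {k : ℕ} (n : Fin k → ℕ) :=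
  ∀ i : Fin k, ℙ K (Fin (n i + 1) → K)

/-- A vector representative of the Segre image `ν(x)` of a point `x ∈ Y`:
the tensor product of representatives of the coordinates. -/
noncomputable def segreVec {K : Type*} [Field K] {k : ℕ} {n : Fin k → ℕ}
    (x : MultiProj K n) : PiTensorProduct K (fun i : Fin k => Fin (n i + 1) → K) :=
  PiTensorProduct.tprod K (fun i => (x i).rep)

/-- `e(S) = #S − 1 − dim⟨ν(S)⟩`, computed as `#S` minus the rank of the linear span
of vector representatives of `ν(S)`. -/
noncomputable def eSet {K : Type*} [Field K] {k : ℕ} {n : Fin k → ℕ}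
    (S : Set (MultiProj K n)) : ℕ :=
  S.ncard - Module.finrank K ↥(Submodule.span K (segreVec '' S))

/-- `S ⊆ Y` is nondegenerate: `π i '' S` spans `P^{n i}` for every `i`. -/
def Nondeg {K : Type*} [Field K] {k : ℕ} {n : Fin k → ℕ}
    (S : Set (MultiProj K n)) : Prop :=
  ∀ i : Fin k, Submodule.span K ((fun x => (x i).rep) '' S) = ⊤

/-- For products of `P^1`'s: `S` is nondegenerate iff each projection has ≥ 2 points. -/
def NondegPts {K : Type*} [Field K] {k : ℕ} {n : Fin k → ℕ}
    (S : Set (MultiProj K n)) : Prop :=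
  ∀ i : Fin k, ∃ p ∈ S, ∃ q ∈ S, p i ≠ q i

/-- `S` is a circuit: linearly dependent, but every proper subset is linearly independent. -/
def IsCircuit {K : Type*} [Field K] {k : ℕ} {n : Fin k → ℕ}
    (S : Set (MultiProj K n)) : Prop :=
  0 < eSet S ∧ ∀ S' : Set (MultiProj K n), S' ⊂ S → eSet S' = 0

/-- `q ∈ P^r` equals `ν(s)` for the point `s ∈ Y`. -/
def IsSegreOf {K : Type*} [Field K] {k : ℕ} {n : Fin k → ℕ}
    (q : ℙ K (PiTensorProduct K (fun i : Fin k => Fin (n i + 1) → K)))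
    (s : MultiProj K n) : Prop :=
  ∃ c : K, q.rep = c • segreVec s

/-- `q ∈ P^r` lies on the Segre variety `ν(Y)`. -/
def InSegre {K : Type*} [Field K] {k : ℕ} {n : Fin k → ℕ}
    (q : ℙ K (PiTensorProduct K (fun i : Fin k => Fin (n i + 1) → K))) : Prop :=
  ∃ y : MultiProj K n, IsSegreOf q y

/-- `S` is minimal: there is no projective line `L ⊆ P^r` contained in the Segre variety
`ν(Y)` meeting `ν(S)` in at least two points. -/
def IsMinimal {K : Type*} [Field K] {k : ℕ} {n : Fin k → ℕ}
    (S : Set (MultiProj K n)) : Prop :=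
  ¬ ∃ W : Submodule K (PiTensorProduct K (fun i : Fin k => Fin (n i + 1) → K)),
      Module.finrank K ↥W = 2 ∧
      (∀ x : ℙ K (PiTensorProduct K (fun i : Fin k => Fin (n i + 1) → K)),
        x.rep ∈ W → InSegre x) ∧
      ∃ x₁ x₂ : ℙ K (PiTensorProduct K (fun i : Fin k => Fin (n i + 1) → K)),
        x₁ ≠ x₂ ∧ x₁.rep ∈ W ∧ x₂.rep ∈ W ∧
        (∃ s₁ ∈ S, IsSegreOf x₁ s₁) ∧ (∃ s₂ ∈ S, IsSegreOf x₂ s₂)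

/-- The `X`-rank of a point `q ∈ P^r`: the minimal cardinality of a finite `A ⊆ Y`
with `q ∈ ⟨ν(A)⟩`. -/
noncomputable def xRank {K : Type*} [Field K] {k : ℕ} {n : Fin k → ℕ}
    (q : ℙ K (PiTensorProduct K (fun i : Fin k => Fin (n i + 1) → K))) : ℕ :=
  sInf {m : ℕ | ∃ A : Set (MultiProj K n), A.Finite ∧ A.ncard = m ∧
    q.rep ∈ Submodule.span K (segreVec '' A)}

open Module

/-- Rado's theorem on independent transversals, for vector spaces. -/
theorem rado_aux {K M ι : Type*} [Field K] [AddCommGroup M] [Module K M] [FiniteDimensional K M]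
    [Fintype ι] [DecidableEq ι] [DecidableEq M] (m : ℕ) : ∀ (A : ι → Finset M),
    (∑ i, (A i).card = m) →
    (∀ B : Finset ι, B.card ≤ finrank K (Submodule.span K (⋃ b ∈ B, (A b : Set M)))) →
    ∃ f : ι → M, (∀ i, f i ∈ A i) ∧ LinearIndependent K f := by
  induction m using Nat.strong_induction_on with
  | _ m ih =>
  intro A hm h
  by_cases hbig : ∃ i, 1 < (A i).card
  · obtain ⟨i, hi⟩ := hbig
    obtain ⟨x, hx, y, hy, hxy⟩ := Finset.one_lt_card.mp hi
    -- removing an element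
    have key : ∀ z ∈ A i, (∃ f : ι → M, (∀ i, f i ∈ A i) ∧ LinearIndependent K f) ∨
        ∃ B : Finset ι, i ∉ B ∧ finrank K (Submodule.span K
          ((⋃ b ∈ B, (A b : Set M)) ∪ ((A i).erase z : Finset M))) ≤ B.card := by
      intro z hz
      by_cases hc : ∀ B : Finset ι, B.card ≤ finrank K (Submodule.span K
          (⋃ b ∈ B, ((Function.update A i ((A i).erase z) b : Finset M) : Set M)))
      · left
        obtain ⟨f, hf, hf2⟩ := ih (∑ j, (Function.update A i ((A i).erase z) j).card) (by
          rw [← hm]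
          apply Finset.sum_lt_sum
          · intro j _
            by_cases hj : j = i
            · subst hj; simp [Finset.card_le_card (Finset.erase_subset _ _)]
            · simp [Function.update_of_ne hj]
          · exact ⟨i, Finset.mem_univ _, by
              simp only [Function.update_self]; exact Finset.card_erase_lt_of_mem hz⟩) _ rfl hc
        refine ⟨f, fun j => ?_, hf2⟩
        have := hf j
        by_cases hj : j = i
        · subst hj
          simp only [Function.update_self] at this
          exact Finset.mem_of_mem_erase this
        · simpa [Function.update_of_ne hj] using this
      · right
        push Not at hc
        obtain ⟨B, hB⟩ := hc
        have hiB : i ∈ B := by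
          by_contra hiB
          have h1 := h B
          have : (⋃ b ∈ B, ((Function.update A i ((A i).erase z) b : Finset M) : Set M)) =
              ⋃ b ∈ B, (A b : Set M) := by
            refine Set.iUnion₂_congr fun b hb => ?_
            rw [Function.update_of_ne (by rintro rfl; exact hiB hb)]
          rw [this] at hB
          omega
        refine ⟨B.erase i, Finset.notMem_erase _ _, ?_⟩
        have : (⋃ b ∈ B, ((Function.update A i ((A i).erase z) b : Finset M) : Set M)) =
            (⋃ b ∈ B.erase i, (A b : Set M)) ∪ ((A i).erase z : Finset M) := by
          conv_lhs => rw [← Finset.insert_erase hiB]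
          rw [Finset.set_biUnion_insert, Function.update_self, Set.union_comm]
          congr 1
          refine Set.iUnion₂_congr fun b hb => ?_
          rw [Function.update_of_ne (Finset.ne_of_mem_erase hb)]
        rw [← this, Finset.card_erase_of_mem hiB]
        omega
    rcases key x hx with h1 | ⟨B1, hi1, hB1⟩
    · exact h1
    rcases key y hy with h1 | ⟨B2, hi2, hB2⟩
    · exact h1
    exfalso
    set U := Submodule.span K ((⋃ b ∈ B1, (A b : Set M)) ∪ ((A i).erase x : Finset M)) with hU
    set W := Submodule.span K ((⋃ b ∈ B2, (A b : Set M)) ∪ ((A i).erase y : Finset M)) with hW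
    have e := Submodule.finrank_sup_add_finrank_inf_eq U W
    have c1 := h (insert i (B1 ∪ B2))
    have c2 := h (B1 ∩ B2)
    have hAU : ∀ b ∈ B1, (A b : Set M) ⊆ U := fun b hb v hv => Submodule.subset_span
      (Or.inl (Set.mem_biUnion (Finset.mem_coe.mpr hb) hv))
    have hAW : ∀ b ∈ B2, (A b : Set M) ⊆ W := fun b hb v hv => Submodule.subset_span
      (Or.inl (Set.mem_biUnion (Finset.mem_coe.mpr hb) hv))
    have l1 : Submodule.span K (⋃ b ∈ insert i (B1 ∪ B2), (A b : Set M)) ≤ U ⊔ W := by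
      rw [Submodule.span_le]
      refine Set.iUnion₂_subset fun b hb v hv => ?_
      rcases Finset.mem_insert.mp hb with rfl | hb
      · by_cases hvx : v = x
        · refine (le_sup_right : W ≤ U ⊔ W) (Submodule.subset_span (Or.inr ?_))
          subst hvx
          exact Finset.mem_coe.mpr (Finset.mem_erase.mpr ⟨hxy, hx⟩)
        · refine (le_sup_left : U ≤ U ⊔ W) (Submodule.subset_span (Or.inr ?_))
          exact Finset.mem_coe.mpr (Finset.mem_erase.mpr ⟨hvx, hv⟩)
      · rcases Finset.mem_union.mp hb with hb | hb
        · exact (le_sup_left : U ≤ U ⊔ W) (hAU b hb hv)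
        · exact (le_sup_right : W ≤ U ⊔ W) (hAW b hb hv)
    have l2 : Submodule.span K (⋃ b ∈ B1 ∩ B2, (A b : Set M)) ≤ U ⊓ W := by
      rw [Submodule.span_le]
      refine Set.iUnion₂_subset fun b hb v hv => ?_
      rw [Finset.mem_inter] at hb
      exact ⟨hAU b hb.1 hv, hAW b hb.2 hv⟩
    have m1 := Submodule.finrank_mono l1
    have m2 := Submodule.finrank_mono l2
    have hcard := Finset.card_union_add_card_inter B1 B2
    rw [Finset.card_insert_of_notMem (by simp [hi1, hi2])] at c1
    omega
  · push Not at hbig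
    have hne : ∀ i, (A i).Nonempty := by
      intro i
      rw [Finset.nonempty_iff_ne_empty]
      intro h0
      have := h {i}
      simp [h0] at this
    choose f hf using hne
    have hA : ∀ i, (A i : Set M) = {f i} := by
      intro i
      ext v
      simp only [Finset.mem_coe, Set.mem_singleton_iff]
      refine ⟨fun hv => Finset.card_le_one.mp (hbig i) _ hv _ (hf i), ?_⟩
      rintro rfl; exact hf i
    refine ⟨f, hf, ?_⟩
    rw [linearIndependent_iff_card_le_finrank_span]
    have := h Finset.univ
    have e : (⋃ b ∈ (Finset.univ : Finset ι), (A b : Set M)) = Set.range f := by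
      ext v
      simp only [hA, Finset.mem_univ, Set.iUnion_true, Set.mem_iUnion, Set.mem_singleton_iff,
        Set.mem_range, exists_prop, true_and]
      exact ⟨fun ⟨i, h⟩ => ⟨i, h.symm⟩, fun ⟨i, h⟩ => ⟨i, h.symm⟩⟩
    rw [e] at this
    exact this

/-- The linear functional on the tensor product given by a family of functionals. -/
theorem exists_prod_functional {K : Type*} [Field K] {k : ℕ} {n : Fin k → ℕ}
    (F : ∀ i, (Fin (n i + 1) → K) →ₗ[K] K) :
    ∃ G : PiTensorProduct K (fun i : Fin k => Fin (n i + 1) → K) →ₗ[K] K,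
      ∀ x : MultiProj K n, G (segreVec x) = ∏ i, F i (x i).rep := by
  refine ⟨PiTensorProduct.lift ((MultilinearMap.mkPiAlgebra K (Fin k) K).compLinearMap F), ?_⟩
  intro x
  simp [segreVec]

theorem functional_vanish {K : Type*} [Field K] {k : ℕ} {n : Fin k → ℕ}
    (F : ∀ i, (Fin (n i + 1) → K) →ₗ[K] K) (C : Set (MultiProj K n)) (p : MultiProj K n)
    (hp : segreVec p ∈ Submodule.span K (segreVec '' C))
    (hC : ∀ c ∈ C, ∃ i, F i (c i).rep = 0) : ∃ i, F i (p i).rep = 0 := by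
  obtain ⟨G, hG⟩ := exists_prod_functional F
  have hle : Submodule.span K (segreVec '' C) ≤ LinearMap.ker G := by
    rw [Submodule.span_le]
    rintro _ ⟨c, hc, rfl⟩
    obtain ⟨i, hi⟩ := hC c hc
    simp only [SetLike.mem_coe, LinearMap.mem_ker, hG]
    exact Finset.prod_eq_zero (Finset.mem_univ i) hi
  have := hle hp
  rw [LinearMap.mem_ker, hG, Finset.prod_eq_zero_iff] at this
  obtain ⟨i, -, hi⟩ := this
  exact ⟨i, hi⟩

theorem mem_of_segre_mem {K : Type*} [Field K] {k : ℕ} {n : Fin k → ℕ}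
    (C : Set (MultiProj K n)) (p : MultiProj K n)
    (hp : segreVec p ∈ Submodule.span K (segreVec '' C)) (j : Fin k)
    (U : Submodule K (Fin (n j + 1) → K)) (hC : ∀ c ∈ C, (c j).rep ∈ U) : (p j).rep ∈ U := by
  classical
  by_contra hj
  have h0 : ∀ i, ∃ f : (Fin (n i + 1) → K) →ₗ[K] K, f (p i).rep ≠ 0 := by
    intro i
    obtain ⟨f, hf, -⟩ := Submodule.exists_le_ker_of_notMem (K := K)
      (p := (⊥ : Submodule K (Fin (n i + 1) → K))) (v := (p i).rep)
      (by simpa using (p i).rep_nonzero)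
    exact ⟨f, hf⟩
  choose F hF using h0
  obtain ⟨f, hf, hfU⟩ := Submodule.exists_le_ker_of_notMem hj
  obtain ⟨i, hi⟩ := functional_vanish (Function.update F j f) C p hp (fun c hc => ⟨j, by
    simpa using hfU (hC c hc)⟩)
  by_cases hij : i = j
  · subst hij; simp at hi; exact hf hi
  · rw [Function.update_of_ne hij] at hi; exact hF i hi

/-- Points that agree with `a` outside the factor `j` lie in the image of a linear map. -/
theorem segre_mem_map {K : Type*} [Field K] {k : ℕ} {n : Fin k → ℕ}
    (a c : MultiProj K n) (j : Fin k) (U : Submodule K (Fin (n j + 1) → K))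
    (hcj : (c j).rep ∈ U)
    (h : ∀ i, i ≠ j → (c i).rep ∈ Submodule.span K {(a i).rep}) :
    segreVec c ∈ U.map ((PiTensorProduct.tprod K).toLinearMap (fun i => (a i).rep) j) := by
  classical
  have h' : ∀ i, ∃ s : K, i ≠ j → s • (a i).rep = (c i).rep := by
    intro i
    by_cases hi : i = j
    · exact ⟨1, fun h => absurd hi h⟩
    · obtain ⟨s, hs⟩ := Submodule.mem_span_singleton.mp (h i hi)
      exact ⟨s, fun _ => hs⟩
  choose s hs using h'
  have e : segreVec c = (∏ i, Function.update s j 1 i) •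
      ((PiTensorProduct.tprod K).toLinearMap (fun i => (a i).rep) j) (c j).rep := by
    rw [MultilinearMap.toLinearMap_apply, ← MultilinearMap.map_smul_univ]
    unfold segreVec
    congr 1
    funext i
    by_cases hi : i = j
    · subst hi; simp
    · simp [Function.update_of_ne hi, hs i hi]
  rw [e]
  exact Submodule.smul_mem _ _ (Submodule.mem_map_of_mem hcj)

/-- Project factor `j` modulo the point `a` and include it in the product of all quotients. -/
noncomputable def gmap {K : Type*} [Field K] {k : ℕ} {n : Fin k → ℕ} (a : MultiProj K n)
    (j : Fin k) : (Fin (n j + 1) → K) →ₗ[K]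
      (∀ j : Fin k, (Fin (n j + 1) → K) ⧸ Submodule.span K {(a j).rep}) :=
  LinearMap.single K (fun j : Fin k => (Fin (n j + 1) → K) ⧸ Submodule.span K {(a j).rep}) j ∘ₗ
    Submodule.mkQ _

theorem gmap_eq_zero {K : Type*} [Field K] {k : ℕ} {n : Fin k → ℕ} (a : MultiProj K n)
    (j : Fin k) (v : Fin (n j + 1) → K) :
    gmap a j v = 0 ↔ v ∈ Submodule.span K {(a j).rep} := by
  simp [gmap]

theorem gmap_apply_ne {K : Type*} [Field K] {k : ℕ} {n : Fin k → ℕ} (a : MultiProj K n)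
    (i j : Fin k) (hij : i ≠ j) (v : Fin (n j + 1) → K) :
    gmap a j v i = 0 := by
  simp [gmap, hij]

/-- Span of the images of the coordinates of points in `C`. -/
noncomputable def wspan {K : Type*} [Field K] {k : ℕ} {n : Fin k → ℕ} (a : MultiProj K n)
    (C : Set (MultiProj K n)) :
    Submodule K (∀ j : Fin k, (Fin (n j + 1) → K) ⧸ Submodule.span K {(a j).rep}) :=
  Submodule.span K (⋃ c ∈ C, Set.range (fun j => gmap a j (c j).rep))

theorem gmap_mem_wspan {K : Type*} [Field K] {k : ℕ} {n : Fin k → ℕ} (a : MultiProj K n)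
    (C : Set (MultiProj K n)) (c : MultiProj K n) (hc : c ∈ C) (j : Fin k) :
    gmap a j (c j).rep ∈ wspan a C :=
  Submodule.subset_span (Set.mem_biUnion hc ⟨j, rfl⟩)

theorem finrank_quot {K : Type*} [Field K] {k : ℕ} {n : Fin k → ℕ} (a : MultiProj K n) :
    finrank K (∀ j : Fin k, (Fin (n j + 1) → K) ⧸ Submodule.span K {(a j).rep}) = ∑ j, n j := by
  rw [Module.finrank_pi_fintype]
  refine Finset.sum_congr rfl fun j _ => ?_
  have h := Submodule.finrank_quotient_add_finrank (Submodule.span K {(a j).rep})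
  rw [finrank_span_singleton (a j).rep_nonzero] at h
  simp at h
  exact h

/-- If all coordinates of all points of `S` are in the preimage of `wspan`, it is everything. -/
theorem wspan_eq_top {K : Type*} [Field K] {k : ℕ} {n : Fin k → ℕ} (a : MultiProj K n)
    (S C : Set (MultiProj K n)) (hnd : Nondeg S)
    (h : ∀ p ∈ S, ∀ j, gmap a j (p j).rep ∈ wspan a C) : wspan a C = ⊤ := by
  classical
  have h1 : ∀ j v, gmap a j v ∈ wspan a C := by
    intro j v
    have hle : Submodule.span K ((fun x : MultiProj K n => (x j).rep) '' S) ≤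
        (wspan a C).comap (gmap a j) := by
      rw [Submodule.span_le]
      rintro _ ⟨p, hp, rfl⟩
      exact h p hp j
    rw [hnd j] at hle
    exact hle (Submodule.mem_top)
  rw [eq_top_iff]
  intro v _
  rw [← Finset.univ_sum_single v]
  refine Submodule.sum_mem _ fun j _ => ?_
  obtain ⟨w, hw⟩ := Submodule.mkQ_surjective _ (v j)
  have := h1 j w
  simpa [gmap, hw] using this

theorem proj_eq_of_mem {K V : Type*} [Field K] [AddCommGroup V] [Module K V] (p q : ℙ K V)
    (h : p.rep ∈ Submodule.span K {q.rep}) : p = q := by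
  obtain ⟨s, hs⟩ := Submodule.mem_span_singleton.mp h
  rw [← p.mk_rep, ← q.mk_rep, Projectivization.mk_eq_mk_iff']
  exact ⟨s, hs⟩

/-- The main rank condition. -/
theorem rank_cond {K : Type*} [Field K] {k : ℕ} {n : Fin k → ℕ}
    (hk : 0 < k)
    (S : Set (MultiProj K n)) (hSfin : S.Finite) (hScard : S.ncard = 5)
    (hnd : Nondeg S) (hind : ∀ S' ⊂ S, S'.ncard ≤ finrank K (Submodule.span K (segreVec '' S')))
    (hdep : ∀ p ∈ S, segreVec p ∈ Submodule.span K (segreVec '' (S \ {p})))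
    (hsum : 4 ≤ ∑ i, n i) (a : MultiProj K n) (ha : a ∈ S) (C : Set (MultiProj K n))
    (hC : C ⊆ S \ {a}) : C.ncard ≤ finrank K (wspan a C) := by
  classical
  have hCfin : C.Finite := hSfin.subset (hC.trans Set.sdiff_subset)
  have haC : a ∉ C := fun h => (hC h).2 rfl
  have hga : ∀ j, gmap a j (a j).rep = 0 := fun j =>
    (gmap_eq_zero a j _).mpr (Submodule.mem_span_singleton_self _)
  have hins : insert a C ⊆ S := Set.insert_subset ha (hC.trans Set.sdiff_subset)
  have hinscard : (insert a C).ncard = C.ncard + 1 := Set.ncard_insert_of_notMem haC hCfin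
  have hinscard5 := Set.ncard_le_ncard hins hSfin
  have hrest : (S \ insert a C).ncard + (insert a C).ncard = S.ncard :=
    Set.ncard_sdiff_add_ncard_of_subset hins hSfin
  -- large case
  by_cases hbig : 3 ≤ C.ncard
  · have : wspan a C = ⊤ := by
      apply wspan_eq_top a S C hnd
      intro p hp j
      by_cases hpC : p ∈ insert a C
      · rcases hpC with rfl | hpC
        · rw [hga]; exact Submodule.zero_mem _
        · exact gmap_mem_wspan a C p hpC j
      · have hsub : S \ {p} ⊆ insert a C := by
          intro q hq
          by_contra hqC
          have : ({p, q} : Set (MultiProj K n)) ⊆ S \ insert a C := by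
            rintro r (rfl | rfl)
            · exact ⟨hp, hpC⟩
            · exact ⟨hq.1, hqC⟩
          have h2 := Set.ncard_le_ncard this (hSfin.subset Set.sdiff_subset)
          rw [Set.ncard_pair (fun h => hq.2 h.symm)] at h2
          omega
        have hmem := Submodule.span_mono (R := K) (Set.image_mono (f := segreVec) hsub) (hdep p hp)
        refine mem_of_segre_mem (insert a C) p hmem j ((wspan a C).comap (gmap a j)) ?_
        rintro c (rfl | hc)
        · rw [Submodule.mem_comap, hga]; exact Submodule.zero_mem _
        · exact gmap_mem_wspan a C c hc j
    rw [this, finrank_top, finrank_quot]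
    omega
  -- small cases
  by_contra hlt
  push Not at hlt
  have hproper : insert a C ⊂ S := by
    refine hins.ssubset_of_ne fun h => ?_
    rw [h] at hinscard; omega
  have hi := hind _ hproper
  obtain ⟨j, y, hjy⟩ : ∃ (j : Fin k) (y : Fin (n j + 1) → K), ∀ c ∈ C,
      (∀ i, i ≠ j → gmap a i (c i).rep = 0) ∧ (c j).rep ∈ Submodule.span K {(a j).rep, y} := by
    by_cases hz : ∀ c ∈ C, ∀ i, gmap a i (c i).rep = 0
    · refine ⟨⟨0, hk⟩, 0, fun c hc => ⟨fun i _ => hz c hc i, ?_⟩⟩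
      exact Submodule.span_mono (by simp) ((gmap_eq_zero a _ _).mp (hz c hc ⟨0, hk⟩))
    · push Not at hz
      obtain ⟨d, hd, j, hdj⟩ := hz
      have hmul : ∀ v ∈ wspan a C, ∃ t : K, t • gmap a j (d j).rep = v := by
        intro v hv
        have h1 : finrank K (wspan a C) ≤ 1 := by omega
        have hle : Submodule.span K {gmap a j (d j).rep} ≤ wspan a C := by
          rw [Submodule.span_singleton_le_iff_mem]; exact gmap_mem_wspan a C d hd j
        have := Submodule.eq_of_le_of_finrank_le hle (by
          rw [finrank_span_singleton hdj]; exact h1)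
        rw [← this] at hv
        exact Submodule.mem_span_singleton.mp hv
      refine ⟨j, (d j).rep, fun c hc => ⟨fun i hij => ?_, ?_⟩⟩
      · obtain ⟨t, ht⟩ := hmul _ (gmap_mem_wspan a C c hc i)
        funext l
        by_cases hl : l = i
        · subst hl
          rw [← ht, Pi.smul_apply, gmap_apply_ne a l j hij]; simp
        · rw [gmap_apply_ne a l i hl]; rfl
      · obtain ⟨t, ht⟩ := hmul _ (gmap_mem_wspan a C c hc j)
        have : (c j).rep - t • (d j).rep ∈ Submodule.span K {(a j).rep} := by
          rw [← gmap_eq_zero, map_sub, map_smul, ht, sub_self]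
        have h3 : (c j).rep = ((c j).rep - t • (d j).rep) + t • (d j).rep := by simp
        rw [h3]
        exact Submodule.add_mem _ (Submodule.span_mono (by simp) this)
          (Submodule.smul_mem _ _ (Submodule.subset_span (by simp)))
  by_cases h1 : C.ncard = 1
  · obtain ⟨c, rfl⟩ := Set.ncard_eq_one.mp h1
    have h0 : wspan a {c} = ⊥ := by
      rw [← Submodule.finrank_eq_zero]; omega
    have : c = a := by
      funext i
      apply proj_eq_of_mem
      rw [← gmap_eq_zero]
      have := gmap_mem_wspan a {c} c rfl i
      rw [h0] at this
      simpa using this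
    exact haC (by simp [this])
  have h2 : C.ncard = 2 := by omega
  have hle : Submodule.span K (segreVec '' insert a C) ≤
      (Submodule.span K {(a j).rep, y}).map
        ((PiTensorProduct.tprod K).toLinearMap (fun i => (a i).rep) j) := by
    rw [Submodule.span_le]
    rintro _ ⟨c, (rfl | hc), rfl⟩
    · exact segre_mem_map c c j _ (Submodule.subset_span (by simp))
        (fun i _ => Submodule.mem_span_singleton_self _)
    · exact segre_mem_map a c j _ (hjy c hc).2 (fun i hij =>
        (gmap_eq_zero a i _).mp ((hjy c hc).1 i hij))
  have b1 := Submodule.finrank_mono hle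
  have b2 := Submodule.finrank_map_le
    ((PiTensorProduct.tprod K).toLinearMap (fun i => (a i).rep) j)
    (Submodule.span K {(a j).rep, y})
  have b3 : finrank K (Submodule.span K {(a j).rep, y}) ≤ 2 := by
    have := finrank_span_finset_le_card (R := K) ({(a j).rep, y} : Finset (Fin (n j + 1) → K))
    rw [Finset.coe_pair] at this
    exact this.trans Finset.card_le_two
  omega

theorem sum_le_three {K : Type*} [Field K] {k : ℕ} {n : Fin k → ℕ}
    (hk : 0 < k)
    (S : Set (MultiProj K n)) (hSfin : S.Finite) (hScard : S.ncard = 5)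
    (hnd : Nondeg S) (hind : ∀ S' ⊂ S, S'.ncard ≤ finrank K (Submodule.span K (segreVec '' S')))
    (hdep : ∀ p ∈ S, segreVec p ∈ Submodule.span K (segreVec '' (S \ {p}))) :
    ∑ i, n i ≤ 3 := by
  classical
  by_contra hcon
  have hsum : 4 ≤ ∑ i, n i := by omega
  obtain ⟨a, ha⟩ : S.Nonempty := by
    rw [← Set.ncard_pos hSfin]; omega
  have hrank := rank_cond hk S hSfin hScard hnd hind hdep hsum a ha
  haveI : Fintype ↥(S \ {a}) := (hSfin.subset Set.sdiff_subset).fintype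
  obtain ⟨f, hf, hli⟩ := rado_aux (K := K) (ι := ↥(S \ {a})) _
    (fun b => Finset.univ.image (fun j => gmap a j (b.1 j).rep)) rfl (by
      intro B
      have := hrank (Subtype.val '' (B : Set ↥(S \ {a}))) (by
        rintro _ ⟨b, _, rfl⟩; exact b.2)
      rw [Set.ncard_image_of_injective _ Subtype.val_injective, Set.ncard_coe_finset] at this
      have e : (⋃ c ∈ (Subtype.val '' (B : Set ↥(S \ {a})) : Set (MultiProj K n)),
          Set.range (fun j => gmap a j (c j).rep)) = ⋃ b ∈ B,
          ((Finset.univ.image (fun j => gmap a j (b.1 j).rep) : Finset _) : Set _) := by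
        rw [Set.biUnion_image]
        simp
      unfold wspan at this
      rw [e] at this
      exact this)
  have hf' : ∀ b : ↥(S \ {a}), ∃ j, gmap a j (b.1 j).rep = f b := by
    intro b; simpa using hf b
  choose φ hφ using hf'
  have hF : ∀ j, ∃ F : (Fin (n j + 1) → K) →ₗ[K] K, F (a j).rep ≠ 0 ∧
      ∀ b : ↥(S \ {a}), φ b = j → F (b.1 j).rep = 0 := by
    intro j
    have hli' : LinearIndependent K
        (gmap a j ∘ fun b : {b : ↥(S \ {a}) // φ b = j} => (b.1.1 j).rep) := by
      have := hli.comp (fun b : {b : ↥(S \ {a}) // φ b = j} => b.1) Subtype.val_injective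
      have e : (gmap a j ∘ fun b : {b : ↥(S \ {a}) // φ b = j} => (b.1.1 j).rep) =
          f ∘ (fun b : {b : ↥(S \ {a}) // φ b = j} => b.1) := by
        funext ⟨b, hb⟩
        subst hb
        exact hφ b
      rw [e]
      exact this
    have hd := Submodule.range_ker_disjoint hli'
    have hnot : (a j).rep ∉ Submodule.span K
        (Set.range fun b : {b : ↥(S \ {a}) // φ b = j} => (b.1.1 j).rep) := by
      intro hmem
      refine (a j).rep_nonzero (Submodule.disjoint_def.mp hd _ hmem ?_)
      rw [LinearMap.mem_ker, gmap_eq_zero]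
      exact Submodule.mem_span_singleton_self _
    obtain ⟨F, h1, h2⟩ := Submodule.exists_le_ker_of_notMem hnot
    exact ⟨F, h1, fun b hb => h2 (Submodule.subset_span ⟨⟨b, hb⟩, rfl⟩)⟩
  choose F hFa hFb using hF
  obtain ⟨i, hi⟩ := functional_vanish F (S \ {a}) a (hdep a ha)
    (fun c hc => ⟨φ ⟨c, hc⟩, hFb _ ⟨c, hc⟩ rfl⟩)
  exact hFa i hi

theorem segre_circuit_card_five_classification
    {K : Type*} [Field K] {k : ℕ} {n : Fin k → ℕ}
    (hk : 0 < k) (hn : ∀ i, 0 < n i)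
    (S : Set (MultiProj K n)) (hSfin : S.Finite) (hScard : S.ncard = 5)
    (hnd : Nondeg S) (hcirc : IsCircuit S) :
    (k = 1 ∧ ∀ i, n i = 3) ∨ (k = 2 ∧ ∀ i, n i = 1) ∨
      (k = 2 ∧ ∑ i, n i = 3) ∨ (k = 3 ∧ ∀ i, n i = 1) := by
  classical
  have hind : ∀ S' ⊂ S, S'.ncard ≤ finrank K (Submodule.span K (segreVec '' S')) := by
    intro S' hS'
    have := hcirc.2 S' hS'
    unfold eSet at this
    omega
  have hS4 : finrank K (Submodule.span K (segreVec '' S)) ≤ 4 := by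
    have := hcirc.1
    unfold eSet at this
    omega
  have hdel : ∀ p ∈ S, (S \ {p}).ncard = 4 := by
    intro p hp
    rw [Set.ncard_sdiff_singleton_of_mem hp]; omega
  have hdep : ∀ p ∈ S, segreVec p ∈ Submodule.span K (segreVec '' (S \ {p})) := by
    intro p hp
    haveI : FiniteDimensional K (Submodule.span K (segreVec '' S)) :=
      FiniteDimensional.span_of_finite K (hSfin.image _)
    have h4 := hind (S \ {p}) (Set.sdiff_singleton_ssubset.mpr hp)
    rw [hdel p hp] at h4
    have := Submodule.eq_of_le_of_finrank_le
      (Submodule.span_mono (R := K) (Set.image_mono (f := segreVec)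
        (Set.sdiff_subset : S \ {p} ⊆ S))) (hS4.trans h4)
    rw [this]
    exact Submodule.subset_span ⟨p, hp, rfl⟩
  have hsum := sum_le_three hk S hSfin hScard hnd hind hdep
  have hk3 : k ≤ 3 := by
    have : ∑ i : Fin k, 1 ≤ ∑ i, n i := Finset.sum_le_sum fun i _ => hn i
    simp at this
    omega
  obtain ⟨a, ha⟩ : S.Nonempty := by
    rw [← Set.ncard_pos hSfin]; omega
  interval_cases k
  · left
    refine ⟨rfl, fun i => ?_⟩
    have hi : i = 0 := Subsingleton.elim _ _
    subst hi
    have hle : Submodule.span K (segreVec '' (S \ {a})) ≤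
      (⊤ : Submodule K (Fin (n 0 + 1) → K)).map
        ((PiTensorProduct.tprod K).toLinearMap (fun i => (a i).rep) 0) := by
      rw [Submodule.span_le]
      rintro _ ⟨c, hc, rfl⟩
      exact segre_mem_map a c 0 _ Submodule.mem_top
        (fun i hi => absurd (Subsingleton.elim _ _) hi)
    have b1 := Submodule.finrank_mono hle
    have b2 := Submodule.finrank_map_le
      ((PiTensorProduct.tprod K).toLinearMap (fun i => (a i).rep) 0)
      (⊤ : Submodule K (Fin (n 0 + 1) → K))
    have b3 := hind (S \ {a}) (Set.sdiff_singleton_ssubset.mpr ha)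
    rw [hdel a ha] at b3
    rw [finrank_top, Module.finrank_fin_fun] at b2
    simp at hsum
    omega
  · right
    have h0 := hn 0
    have h1 := hn 1
    simp only [Fin.sum_univ_two] at hsum ⊢
    by_cases h3 : n 0 + n 1 = 3
    · right; left; exact ⟨by trivial, h3⟩
    · left
      refine ⟨by trivial, fun i => ?_⟩
      fin_cases i
      · show n 0 = 1
        omega
      · show n 1 = 1
        omega
  · right; right; right
    have h0 := hn 0
    have h1 := hn 1
    have h2 := hn 2
    rw [Fin.sum_univ_three] at hsum
    refine ⟨rfl, fun i => ?_⟩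
    fin_cases i
    · show n 0 = 1
      omega
    · show n 1 = 1
      omega
    · show n 2 = 1
      omega
end

section
/- Let S ⊆ Y = P^{n_1} × ... × P^{n_k} be a nondegenerate finite set with #S = 5 and e(S) ≥ 2, and let A be the kernel of S. Then one of the following cases occurs: (1) e(S) = 3, A = S, and exactly one index i has dim⟨π_i(A)⟩ = 1 while dim⟨π_j(A)⟩ = 0 for all j ≠ i; (2) e(S) = 2, A = S, and exactly one index i has dim⟨π_i(A)⟩ = 2 while dim⟨π_j(A)⟩ = 0 for all j ≠ i; (3) e(S) = 2, A = S, and exactly two indices i have dim⟨π_i(A)⟩ = 1 while all other indices j have dim⟨π_j(A)⟩ = 0; (4) e(S) = 2, #A = 4, and exactly one index i has dim⟨π_i(A)⟩ = 1 while dim⟨π_j(A)⟩ = 0 for all j ≠ i. -/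
open scoped LinearAlgebra.Projectivization
open Projectivization

/-- `projSpanDim A i` is the rank of the linear span of representatives of `π i '' A`,
i.e. `dim⟨π i (A)⟩ + 1`. -/
noncomputable def projSpanDim {K : Type*} [Field K] {k : ℕ} {n : Fin k → ℕ}
    (A : Set (MultiProj K n)) (i : Fin k) : ℕ :=
  Module.finrank K ↥(Submodule.span K ((fun x => (x i).rep) '' A))


namespace SegreFive

variable {K : Type*} [Field K] {k : ℕ} {n : Fin k → ℕ}

/-- rank of the span of the Segre image -/
noncomputable def rk (S : Set (MultiProj K n)) : ℕ :=
  Module.finrank K ↥(Submodule.span K (segreVec '' S))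

theorem tprod_ne_zero (v : ∀ i : Fin k, Fin (n i + 1) → K) (hv : ∀ i, v i ≠ 0) :
    PiTensorProduct.tprod K v ≠ 0 := by
  have h : ∀ i, ∃ f : Module.Dual K (Fin (n i + 1) → K), f (v i) ≠ 0 := by
    intro i
    by_contra hc
    push Not at hc
    exact hv i ((Module.forall_dual_apply_eq_zero_iff K (v i)).1 hc)
  choose f hf using h
  intro h0
  have h1 := congrArg (PiTensorProduct.lift
    ((MultilinearMap.mkPiAlgebra K (Fin k) K).compLinearMap f)) h0
  rw [PiTensorProduct.lift.tprod, map_zero] at h1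
  simp only [MultilinearMap.compLinearMap_apply, MultilinearMap.mkPiAlgebra_apply] at h1
  exact (Finset.prod_ne_zero_iff.2 (fun i _ => hf i)) h1

theorem segreVec_ne_zero (x : MultiProj K n) : segreVec x ≠ 0 :=
  tprod_ne_zero _ (fun i => (x i).rep_nonzero)

theorem rk_mono {S T : Set (MultiProj K n)} (h : S ⊆ T) : rk S ≤ rk T :=
  Submodule.finrank_mono (Submodule.span_mono (Set.image_mono h))

theorem rk_pos {S : Set (MultiProj K n)} {x : MultiProj K n} (hx : x ∈ S) : 1 ≤ rk S := by
  have h := rk_mono (Set.singleton_subset_iff.2 hx)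
  have : rk ({x} : Set (MultiProj K n)) = 1 := by
    unfold rk
    rw [Set.image_singleton, finrank_span_singleton (segreVec_ne_zero x)]
  omega

theorem rep_mem {i : Fin k} {p q : ℙ K (Fin (n i + 1) → K)}
    (h : q.rep ∈ Submodule.span K {p.rep}) : q = p := by
  obtain ⟨a, ha⟩ := Submodule.mem_span_singleton.1 h
  rw [← q.mk_rep, ← p.mk_rep, Projectivization.mk_eq_mk_iff']
  exact ⟨a, ha⟩

theorem exists_sep {i : Fin k} {p q : ℙ K (Fin (n i + 1) → K)} (h : q ≠ p) :
    ∃ φ : (Fin (n i + 1) → K) →ₗ[K] K, φ p.rep = 0 ∧ φ q.rep ≠ 0 := by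
  obtain ⟨f, hf, hle⟩ := Submodule.exists_le_ker_of_notMem (fun hm => h (rep_mem hm))
  exact ⟨f, hle (Submodule.mem_span_singleton_self _), hf⟩

theorem segreVec_update (x : MultiProj K n) (i : Fin k) (p : ℙ K (Fin (n i + 1) → K)) :
    segreVec (Function.update x i p) =
      PiTensorProduct.tprod K (Function.update (fun j => (x j).rep) i p.rep) := by
  unfold segreVec
  congr 1
  funext j
  by_cases h : j = i
  · subst h; simp
  · simp [h]

/-- The residual inequality. -/
theorem residual (S : Set (MultiProj K n)) (i : Fin k) (p : ℙ K (Fin (n i + 1) → K))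
    (φ : (Fin (n i + 1) → K) →ₗ[K] K) :
    rk {x ∈ S | φ (x i).rep = 0} +
      rk ((fun x => Function.update x i p) '' {x ∈ S | φ (x i).rep ≠ 0}) ≤ rk S := by
  classical
  let f := PiTensorProduct.map (R := K) (s := fun i : Fin k => Fin (n i + 1) → K)
    (t := fun i : Fin k => Fin (n i + 1) → K)
    (Function.update (fun _ => LinearMap.id) i (φ.smulRight p.rep))
  have hf : ∀ x : MultiProj K n,
      f (segreVec x) = φ (x i).rep • segreVec (Function.update x i p) := by
    intro x
    rw [segreVec_update, ← MultilinearMap.map_update_smul]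
    unfold segreVec
    simp only [f]
    rw [PiTensorProduct.map_tprod]
    congr 1
    funext j
    by_cases h : j = i
    · subst h; simp
    · simp [h]
  set W := Submodule.span K (segreVec '' S) with hW
  have hrn := LinearMap.finrank_range_add_finrank_ker (K := K) (V := ↥W)
    (V₂ := PiTensorProduct K (fun i : Fin k => Fin (n i + 1) → K)) (f.domRestrict W)
  have h1 : rk ((fun x => Function.update x i p) '' {x ∈ S | φ (x i).rep ≠ 0}) ≤
      Module.finrank K (f.domRestrict W).range := by
    apply Submodule.finrank_mono
    rw [Submodule.span_le]
    rintro _ ⟨_, ⟨x, ⟨hx, hφ⟩, rfl⟩, rfl⟩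
    refine ⟨(φ (x i).rep)⁻¹ • ⟨segreVec x, Submodule.subset_span ⟨x, hx, rfl⟩⟩, ?_⟩
    rw [map_smul, LinearMap.domRestrict_apply, hf, smul_smul, inv_mul_cancel₀ hφ, one_smul]
  have h2 : rk {x ∈ S | φ (x i).rep = 0} ≤ Module.finrank K (f.domRestrict W).ker := by
    rw [← Submodule.finrank_map_subtype_eq W (f.domRestrict W).ker]
    apply Submodule.finrank_mono
    rw [Submodule.span_le]
    rintro _ ⟨x, ⟨hx, hφ⟩, rfl⟩
    refine ⟨⟨segreVec x, Submodule.subset_span ⟨x, hx, rfl⟩⟩, ?_, rfl⟩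
    simp [hf, hφ]
  have : rk S = Module.finrank K W := rfl
  omega

theorem two_le_rk {S : Set (MultiProj K n)} {x y : MultiProj K n} (hx : x ∈ S) (hy : y ∈ S)
    (h : x ≠ y) : 2 ≤ rk S := by
  obtain ⟨i, hi⟩ := Function.ne_iff.1 h
  obtain ⟨φ, h1, h2⟩ := exists_sep hi.symm
  have hr := residual S i (x i) φ
  have a : 1 ≤ rk {x ∈ S | φ (x i).rep = 0} := rk_pos ⟨hx, h1⟩
  have b := rk_pos (S := (fun z => Function.update z i (x i)) '' {x ∈ S | φ (x i).rep ≠ 0})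
    ⟨y, ⟨hy, h2⟩, rfl⟩
  omega

theorem eq_of_rk_le_one {S : Set (MultiProj K n)} {x y : MultiProj K n} (hS : rk S ≤ 1)
    (hx : x ∈ S) (hy : y ∈ S) : x = y := by
  by_contra h
  have := two_le_rk hx hy h
  omega

theorem agree_of_update {x y : MultiProj K n} {i : Fin k} {p : ℙ K (Fin (n i + 1) → K)}
    (h : Function.update x i p = Function.update y i p) {j : Fin k} (hj : j ≠ i) : x j = y j := by
  have := congrFun h j
  simpa [hj] using this

/-- coordinate `i` is nonconstant on `S` -/
def Varies (S : Set (MultiProj K n)) (i : Fin k) : Prop := ∃ x ∈ S, ∃ y ∈ S, x i ≠ y i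

theorem Varies.exists_ne {S : Set (MultiProj K n)} {i : Fin k} (h : Varies S i)
    (z : MultiProj K n) : ∃ w ∈ S, w i ≠ z i := by
  obtain ⟨x, hx, y, hy, hxy⟩ := h
  by_cases hxz : x i = z i
  · exact ⟨y, hy, fun h => hxy (hxz.trans h.symm)⟩
  · exact ⟨x, hx, hxz⟩

theorem Varies.exists_sep {S : Set (MultiProj K n)} {i : Fin k} (h : Varies S i)
    (z : MultiProj K n) : ∃ φ : (Fin (n i + 1) → K) →ₗ[K] K, φ (z i).rep = 0 ∧
      ∃ w ∈ S, φ (w i).rep ≠ 0 := by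
  obtain ⟨w, hw, hne⟩ := h.exists_ne z
  obtain ⟨φ, h1, h2⟩ := SegreFive.exists_sep hne
  exact ⟨φ, h1, w, hw, h2⟩

/-- In rank two, removing one point leaves points agreeing outside `i`. -/
theorem line_aux {S : Set (MultiProj K n)} (hS : rk S ≤ 2) {i : Fin k} (hi : Varies S i)
    {s : MultiProj K n} (hs : s ∈ S) : ∀ x ∈ S, ∀ y ∈ S, x ≠ s → y ≠ s →
      ∀ j, j ≠ i → x j = y j := by
  obtain ⟨φ, h1, w, hw, h2⟩ := hi.exists_sep s
  have hr := residual S i (s i) φ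
  have a : 1 ≤ rk {x ∈ S | φ (x i).rep = 0} := rk_pos ⟨hs, h1⟩
  have b := rk_pos (S := (fun z => Function.update z i (s i)) '' {x ∈ S | φ (x i).rep ≠ 0})
    ⟨w, ⟨hw, h2⟩, rfl⟩
  intro x hx y hy hxs hys j hj
  have key : ∀ x ∈ S, x ≠ s → φ (x i).rep ≠ 0 := by
    intro x hx hxs h0
    exact hxs (eq_of_rk_le_one (S := {x ∈ S | φ (x i).rep = 0}) (by omega) ⟨hx, h0⟩ ⟨hs, h1⟩)
  exact agree_of_update (eq_of_rk_le_one
    (S := (fun z => Function.update z i (s i)) '' {x ∈ S | φ (x i).rep ≠ 0}) (by omega)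
    ⟨x, ⟨hx, key x hx hxs⟩, rfl⟩ ⟨y, ⟨hy, key y hy hys⟩, rfl⟩) hj

theorem line {S : Set (MultiProj K n)} (hS : rk S ≤ 2) {a b c : MultiProj K n} (ha : a ∈ S)
    (hb : b ∈ S) (hc : c ∈ S) (hab : a ≠ b) (hac : a ≠ c) (hbc : b ≠ c) {i j : Fin k}
    (hi : Varies S i) (hj : Varies S j) : i = j := by
  by_contra hij
  apply hbc
  funext l
  by_cases h : l = i
  · exact line_aux hS hj ha b hb c hc hab.symm hac.symm l (by rw [h]; exact hij)
  · exact line_aux hS hi ha b hb c hc hab.symm hac.symm l h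

theorem projSpanDim_const {S : Set (MultiProj K n)} {s : MultiProj K n} (hs : s ∈ S) {i : Fin k}
    (h : ¬ Varies S i) : projSpanDim S i = 1 := by
  have : (fun x : MultiProj K n => (x i).rep) '' S = {(s i).rep} := by
    apply Set.eq_singleton_iff_unique_mem.2
    refine ⟨⟨s, hs, rfl⟩, ?_⟩
    rintro _ ⟨x, hx, rfl⟩
    by_contra hne
    exact h ⟨x, hx, s, hs, fun h => hne (by simp [h])⟩
  unfold projSpanDim
  rw [this, finrank_span_singleton (s i).rep_nonzero]

theorem projSpanDim_eq_rk {S : Set (MultiProj K n)} {s : MultiProj K n} (hs : s ∈ S) {i : Fin k}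
    (h : ∀ j, j ≠ i → ¬ Varies S j) : projSpanDim S i = rk S := by
  let L := (PiTensorProduct.tprod K (s := fun i : Fin k => Fin (n i + 1) → K)).toLinearMap
    (fun j => (s j).rep) i
  have hL : Function.Injective L := by
    rw [← LinearMap.ker_eq_bot, LinearMap.ker_eq_bot']
    intro v hv
    by_contra hne
    refine tprod_ne_zero (Function.update (fun j => (s j).rep) i v) ?_ hv
    intro j
    by_cases hj : j = i
    · subst hj; simpa using hne
    · simpa [hj] using (s j).rep_nonzero
  have himg : segreVec '' S = L '' ((fun x : MultiProj K n => (x i).rep) '' S) := by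
    rw [Set.image_image]
    apply Set.image_congr
    intro x hx
    change segreVec x = PiTensorProduct.tprod K (Function.update (fun j => (s j).rep) i (x i).rep)
    rw [← segreVec_update]
    congr 1
    funext j
    by_cases hj : j = i
    · subst hj; simp
    · simp only [ne_eq, hj, not_false_eq_true, Function.update_of_ne]
      by_contra hne
      exact h j hj ⟨x, hx, s, hs, hne⟩
  unfold projSpanDim rk
  rw [himg, Submodule.span_image]
  exact (LinearEquiv.finrank_eq (Submodule.equivMapOfInjective L hL _))

theorem exists_varies {S : Set (MultiProj K n)} {a b : MultiProj K n} (ha : a ∈ S) (hb : b ∈ S)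
    (hab : a ≠ b) : ∃ i, Varies S i := by
  obtain ⟨i, hi⟩ := Function.ne_iff.1 hab
  exact ⟨i, a, ha, b, hb, hi⟩

theorem line_conclusion {S : Set (MultiProj K n)} (hfin : S.Finite) (hS : rk S = 2)
    (hc : 2 < S.ncard) :
    ∃ i, projSpanDim S i = 2 ∧ ∀ j, j ≠ i → projSpanDim S j = 1 := by
  obtain ⟨a, b, c, ha, hb, hc, hab, hac, hbc⟩ := (Set.two_lt_ncard_iff hfin).1 hc
  obtain ⟨i, hi⟩ := exists_varies ha hb hab
  have h : ∀ j, j ≠ i → ¬ Varies S j := fun j hj hv =>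
    hj (line hS.le ha hb hc hab hac hbc hv hi)
  exact ⟨i, (projSpanDim_eq_rk ha h).trans hS, fun j hj => projSpanDim_const ha (h j hj)⟩

/-- the plane configuration -/
structure Plane (S : Set (MultiProj K n)) : Prop where
  fin : S.Finite
  card : S.ncard = 5
  rk3 : rk S ≤ 3
  sub : ∀ A, A ⊂ S → rk A ≤ 2 → A.ncard ≤ 3

theorem Plane.hyper {S : Set (MultiProj K n)} (P : Plane S) {i : Fin k}
    {φ : (Fin (n i + 1) → K) →ₗ[K] K} {s t w : MultiProj K n} (hs : s ∈ S) (ht : t ∈ S)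
    (hst : s ≠ t) (hs0 : φ (s i).rep = 0) (ht0 : φ (t i).rep = 0) (hw : w ∈ S)
    (hw0 : φ (w i).rep ≠ 0) :
    (∀ x ∈ S, ∀ y ∈ S, φ (x i).rep ≠ 0 → φ (y i).rep ≠ 0 → ∀ j, j ≠ i → x j = y j) ∧
    {x ∈ S | φ (x i).rep = 0}.ncard ≤ 3 ∧
    ∃ u ∈ S, ∃ v ∈ S, u ≠ v ∧ φ (u i).rep ≠ 0 ∧ φ (v i).rep ≠ 0 := by
  have hr := residual S i (s i) φ
  have hrk := P.rk3
  have a : 2 ≤ rk {x ∈ S | φ (x i).rep = 0} := two_le_rk ⟨hs, hs0⟩ ⟨ht, ht0⟩ hst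
  have b := rk_pos (S := (fun z => Function.update z i (s i)) '' {x ∈ S | φ (x i).rep ≠ 0})
    ⟨w, ⟨hw, hw0⟩, rfl⟩
  have hc : {x ∈ S | φ (x i).rep = 0}.ncard ≤ 3 := by
    apply P.sub _ _ (by omega)
    refine ⟨fun x hx => hx.1, fun h => hw0 (h hw).2⟩
  refine ⟨?_, hc, ?_⟩
  · intro x hx y hy hx0 hy0 j hj
    exact agree_of_update (eq_of_rk_le_one
      (S := (fun z => Function.update z i (s i)) '' {x ∈ S | φ (x i).rep ≠ 0}) (by omega)
      ⟨x, ⟨hx, hx0⟩, rfl⟩ ⟨y, ⟨hy, hy0⟩, rfl⟩) hj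
  · have hsub : {x ∈ S | φ (x i).rep = 0} ⊆ S := fun x hx => hx.1
    have hd := Set.ncard_sdiff_add_ncard_of_subset hsub P.fin
    have hP := P.card
    have : 1 < (S \ {x ∈ S | φ (x i).rep = 0}).ncard := by omega
    obtain ⟨u, v, hu, hv, huv⟩ := (Set.one_lt_ncard_iff (P.fin.subset Set.sdiff_subset)).1 this
    exact ⟨u, hu.1, v, hv.1, huv, fun h => hu.2 ⟨hu.1, h⟩, fun h => hv.2 ⟨hv.1, h⟩⟩

/-- If coordinate `i` has rank at least three, no two points span all of it. -/
theorem exists_sep_two {S : Set (MultiProj K n)} {i : Fin k} (hd : 3 ≤ projSpanDim S i)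
    (s t : MultiProj K n) : ∃ φ : (Fin (n i + 1) → K) →ₗ[K] K, φ (s i).rep = 0 ∧
      φ (t i).rep = 0 ∧ ∃ w ∈ S, φ (w i).rep ≠ 0 := by
  classical
  set U := Submodule.span K ({(s i).rep, (t i).rep} : Set (Fin (n i + 1) → K)) with hU
  have hU2 : Module.finrank K U ≤ 2 := by
    have := finrank_span_finset_le_card (R := K) ({(s i).rep, (t i).rep} : Finset (Fin (n i + 1) → K))
    have h2 := Finset.card_le_two (a := (s i).rep) (b := (t i).rep)
    unfold Set.finrank at this
    rw [Finset.coe_pair] at this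
    exact this.trans h2
  have : ∃ w ∈ S, (w i).rep ∉ U := by
    by_contra hc
    push Not at hc
    have hle : Submodule.span K ((fun x : MultiProj K n => (x i).rep) '' S) ≤ U := by
      rw [Submodule.span_le]
      rintro _ ⟨x, hx, rfl⟩
      exact hc x hx
    have := Submodule.finrank_mono hle
    unfold projSpanDim at hd
    omega
  obtain ⟨w, hw, hwU⟩ := this
  obtain ⟨f, hf, hle⟩ := Submodule.exists_le_ker_of_notMem hwU
  exact ⟨f, hle (Submodule.subset_span (by simp)), hle (Submodule.subset_span (by simp)),
    w, hw, hf⟩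

theorem Plane.not_three {S : Set (MultiProj K n)} (P : Plane S) {i j : Fin k} (hij : j ≠ i)
    (hi : Varies S i) (hj : Varies S j) (hd : 3 ≤ projSpanDim S i) : False := by
  obtain ⟨s, hs, t, ht, hst⟩ := hi
  obtain ⟨φ, a1, a2, w, hw, a3⟩ := exists_sep_two hd s t
  obtain ⟨h1, -, u, hu, v, hv, huv, hu0, hv0⟩ :=
    P.hyper hs ht (fun h => hst (by rw [h])) a1 a2 hw a3
  have huv' := h1 u hu v hv hu0 hv0
  obtain ⟨ψ, b1, w', hw', b3⟩ := hj.exists_sep u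
  have b2 : ψ (v j).rep = 0 := by rw [← huv' j hij]; exact b1
  obtain ⟨h2, -, x, hx, y, hy, hxy, hx0, hy0⟩ := P.hyper hu hv huv b1 b2 hw' b3
  have hxy' := h2 x hx y hy hx0 hy0
  obtain ⟨χ, c1, c2, w'', hw'', c3⟩ := exists_sep_two hd u v
  obtain ⟨h3, hcard, -⟩ := P.hyper hu hv huv c1 c2 hw'' c3
  have hxi := hxy' i hij.symm
  by_cases h0 : χ (x i).rep = 0
  · have hsub : ({u, v, x, y} : Set (MultiProj K n)) ⊆ {x ∈ S | χ (x i).rep = 0} := by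
      rintro z (rfl | rfl | rfl | rfl)
      · exact ⟨hu, c1⟩
      · exact ⟨hv, c2⟩
      · exact ⟨hx, h0⟩
      · exact ⟨hy, hxi ▸ h0⟩
    have hle := Set.ncard_le_ncard hsub (P.fin.subset (fun z hz => hz.1))
    have hux : u ≠ x := by rintro rfl; exact hx0 b1
    have huy : u ≠ y := by rintro rfl; exact hy0 b1
    have hvx : v ≠ x := by rintro rfl; exact hx0 b2
    have hvy : v ≠ y := by rintro rfl; exact hy0 b2
    rw [Set.ncard_insert_of_notMem (by simp [*]), Set.ncard_insert_of_notMem (by simp [*]),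
      Set.ncard_pair hxy] at hle
    omega
  · apply hxy
    funext l
    by_cases hl : l = j
    · subst hl
      exact h3 x hx y hy h0 (hxi ▸ h0) l hij
    · exact hxy' l hl

theorem Plane.not_three_varies {S : Set (MultiProj K n)} (P : Plane S) {i j l : Fin k}
    (hij : j ≠ i) (hil : l ≠ i) (hjl : l ≠ j)
    (hi : Varies S i) (hj : Varies S j) (hl : Varies S l) : False := by
  -- no two points share the `m`-th coordinate when `m` is varying
  have main : ∀ {i j l : Fin k}, j ≠ i → l ≠ i → l ≠ j → Varies S i → Varies S j → Varies S l →
      ∀ s ∈ S, ∀ t ∈ S, s ≠ t → ∀ φ : (Fin (n i + 1) → K) →ₗ[K] K, φ (s i).rep = 0 →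
      φ (t i).rep = 0 → ∀ w ∈ S, φ (w i).rep ≠ 0 → False := by
    intro i j l hij hil hjl hi hj hl s hs t ht hst φ a1 a2 w hw a3
    obtain ⟨h1, -, u, hu, v, hv, huv, hu0, hv0⟩ := P.hyper hs ht hst a1 a2 hw a3
    have huv' := h1 u hu v hv hu0 hv0
    obtain ⟨ψ, b1, w', hw', b3⟩ := hj.exists_sep u
    have b2 : ψ (v j).rep = 0 := by rw [← huv' j hij]; exact b1
    obtain ⟨h2, -, x, hx, y, hy, hxy, hx0, hy0⟩ := P.hyper hu hv huv b1 b2 hw' b3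
    have hxy' := h2 x hx y hy hx0 hy0
    obtain ⟨χ, c1, w'', hw'', c3⟩ := hl.exists_sep u
    have c2 : χ (v l).rep = 0 := by rw [← huv' l hil]; exact c1
    obtain ⟨h3, -, p, hp, q, hq, hpq, hp0, hq0⟩ := P.hyper hu hv huv c1 c2 hw'' c3
    have hxl := hxy' l hjl
    by_cases h0 : χ (x l).rep = 0
    · have hy0' : χ (y l).rep = 0 := hxl ▸ h0
      have hsub : ({u, v, x, y, p, q} : Set (MultiProj K n)) ⊆ S := by
        rintro z (rfl | rfl | rfl | rfl | rfl | rfl) <;> assumption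
      have hle := Set.ncard_le_ncard hsub P.fin
      have hux : u ≠ x := by rintro rfl; exact hx0 b1
      have huy : u ≠ y := by rintro rfl; exact hy0 b1
      have hvx : v ≠ x := by rintro rfl; exact hx0 b2
      have hvy : v ≠ y := by rintro rfl; exact hy0 b2
      have hup : u ≠ p := by rintro rfl; exact hp0 c1
      have huq : u ≠ q := by rintro rfl; exact hq0 c1
      have hvp : v ≠ p := by rintro rfl; exact hp0 c2
      have hvq : v ≠ q := by rintro rfl; exact hq0 c2
      have hxp : x ≠ p := by rintro rfl; exact hp0 h0
      have hxq : x ≠ q := by rintro rfl; exact hq0 h0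
      have hyp : y ≠ p := by rintro rfl; exact hp0 hy0'
      have hyq : y ≠ q := by rintro rfl; exact hq0 hy0'
      rw [Set.ncard_insert_of_notMem (by simp [*]), Set.ncard_insert_of_notMem (by simp [*]),
        Set.ncard_insert_of_notMem (by simp [*]), Set.ncard_insert_of_notMem (by simp [*]),
        Set.ncard_pair hpq, P.card] at hle
      omega
    · apply hxy
      funext m
      by_cases hm : m = j
      · subst hm
        exact h3 x hx y hy h0 (hxl ▸ h0) m hjl.symm
      · exact hxy' m hm
  have injj : ∀ s ∈ S, ∀ t ∈ S, s ≠ t → s j ≠ t j := by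
    intro s hs t ht hst h
    obtain ⟨φ, a1, w, hw, a3⟩ := hj.exists_sep s
    exact main hij.symm hjl hil hj hi hl s hs t ht hst φ a1 (h ▸ a1) w hw a3
  have injl : ∀ s ∈ S, ∀ t ∈ S, s ≠ t → s l ≠ t l := by
    intro s hs t ht hst h
    obtain ⟨φ, a1, w, hw, a3⟩ := hl.exists_sep s
    exact main hil.symm hjl.symm hij hl hi hj s hs t ht hst φ a1 (h ▸ a1) w hw a3
  obtain ⟨s, hs⟩ : ∃ s, s ∈ S := ⟨hi.choose, hi.choose_spec.1⟩
  obtain ⟨φ, a1, w, hw, a3⟩ := hi.exists_sep s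
  have hr := residual S i (s i) φ
  have hrk := P.rk3
  have a : 1 ≤ rk {x ∈ S | φ (x i).rep = 0} := rk_pos ⟨hs, a1⟩
  have key : ∀ x ∈ S, x ≠ s → φ (x i).rep ≠ 0 := by
    intro x hx hxs h0
    exact main hij hil hjl hi hj hl x hx s hs hxs φ h0 a1 w hw a3
  have hcd := Set.ncard_sdiff_singleton_add_one hs P.fin
  have hP := P.card
  obtain ⟨b, c, d, hb, hc, hd, hbc, hbd, hcd⟩ :=
    (Set.two_lt_ncard_iff (s := S \ {s}) (P.fin.subset Set.sdiff_subset)).1 (by omega)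
  have mem : ∀ x ∈ S \ {s}, Function.update x i (s i) ∈
      (fun z => Function.update z i (s i)) '' {x ∈ S | φ (x i).rep ≠ 0} :=
    fun x hx => ⟨x, ⟨hx.1, key x hx.1 hx.2⟩, rfl⟩
  have ne : ∀ x ∈ S \ {s}, ∀ y ∈ S \ {s}, x ≠ y →
      Function.update x i (s i) ≠ Function.update y i (s i) :=
    fun x hx y hy hxy h => injj x hx.1 y hy.1 hxy (agree_of_update h hij)
  refine hjl.symm (line (S := (fun z => Function.update z i (s i)) '' {x ∈ S | φ (x i).rep ≠ 0})
    (by omega) (mem b hb) (mem c hc) (mem d hd) (ne b hb c hc hbc) (ne b hb d hd hbd)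
    (ne c hc d hd hcd) ⟨_, mem b hb, _, mem c hc, ?_⟩ ⟨_, mem b hb, _, mem c hc, ?_⟩)
  · simpa [hij] using injj b hb.1 c hc.1 hbc
  · simpa [hil] using injl b hb.1 c hc.1 hbc

theorem two_le_projSpanDim {S : Set (MultiProj K n)} {i : Fin k} (h : Varies S i) :
    2 ≤ projSpanDim S i := by
  obtain ⟨x, hx, y, hy, hxy⟩ := h
  have hli : LinearIndependent K ![(x i).rep, (y i).rep] := by
    rw [LinearIndependent.pair_iff' (x i).rep_nonzero]
    intro a ha
    exact hxy (rep_mem (Submodule.mem_span_singleton.2 ⟨a, ha⟩)).symm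
  have h2 := finrank_span_eq_card hli
  have : Submodule.span K (Set.range ![(x i).rep, (y i).rep]) ≤
      Submodule.span K ((fun x : MultiProj K n => (x i).rep) '' S) := by
    apply Submodule.span_mono
    rintro _ ⟨m, rfl⟩
    fin_cases m
    · exact ⟨x, hx, rfl⟩
    · exact ⟨y, hy, rfl⟩
  have := Submodule.finrank_mono this
  rw [h2] at this
  simpa [projSpanDim] using this

theorem Plane.conclusion {S : Set (MultiProj K n)} (P : Plane S) (h3 : rk S = 3) :
    (∃ i, projSpanDim S i = 3 ∧ ∀ j, j ≠ i → projSpanDim S j = 1) ∨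
    (∃ i j, i ≠ j ∧ projSpanDim S i = 2 ∧ projSpanDim S j = 2 ∧
        ∀ l, l ≠ i → l ≠ j → projSpanDim S l = 1) := by
  obtain ⟨a, b, ha, hb, hab⟩ := (Set.one_lt_ncard_iff P.fin).1 (by rw [P.card]; omega)
  obtain ⟨i, hi⟩ := exists_varies ha hb hab
  by_cases h : ∃ j, j ≠ i ∧ Varies S j
  · right
    obtain ⟨j, hij, hj⟩ := h
    have h1 := two_le_projSpanDim hi
    have h2 := two_le_projSpanDim hj
    have h3 : ¬ 3 ≤ projSpanDim S i := fun h => P.not_three hij hi hj h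
    have h4 : ¬ 3 ≤ projSpanDim S j := fun h => P.not_three hij.symm hj hi h
    exact ⟨i, j, hij.symm, by omega, by omega, fun l hli hlj =>
      projSpanDim_const ha (fun hl => P.not_three_varies hij hli hlj hi hj hl)⟩
  · left
    push Not at h
    exact ⟨i, (projSpanDim_eq_rk ha h).trans h3, fun j hj => projSpanDim_const ha (h j hj)⟩

end SegreFive

theorem card_five_e_ge_two_classification
    {K : Type*} [Field K] {k : ℕ} {n : Fin k → ℕ}
    (hk : 0 < k) (hn : ∀ i, 0 < n i)
    (S : Set (MultiProj K n)) (hSfin : S.Finite) (hScard : S.ncard = 5)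
    (hnd : Nondeg S) (he2 : 2 ≤ eSet S)
    (A : Set (MultiProj K n)) (hAS : A ⊆ S) (heA : eSet A = eSet S)
    (hker : ∀ A' : Set (MultiProj K n), A' ⊂ A → eSet A' < eSet S) :
    (eSet S = 3 ∧ A = S ∧
      ∃ i, projSpanDim A i = 2 ∧ ∀ j, j ≠ i → projSpanDim A j = 1) ∨
    (eSet S = 2 ∧ A = S ∧
      ∃ i, projSpanDim A i = 3 ∧ ∀ j, j ≠ i → projSpanDim A j = 1) ∨
    (eSet S = 2 ∧ A = S ∧
      ∃ i j, i ≠ j ∧ projSpanDim A i = 2 ∧ projSpanDim A j = 2 ∧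
        ∀ l, l ≠ i → l ≠ j → projSpanDim A l = 1) ∨
    (eSet S = 2 ∧ A.ncard = 4 ∧
      ∃ i, projSpanDim A i = 2 ∧ ∀ j, j ≠ i → projSpanDim A j = 1) := by
  have he : ∀ T : Set (MultiProj K n), eSet T = T.ncard - SegreFive.rk T := fun _ => rfl
  have hAfin := hSfin.subset hAS
  have hcard := Set.ncard_le_ncard hAS hSfin
  have heS := he S
  have heA' := he A
  obtain ⟨a, b, ha, hb, hab⟩ := (Set.one_lt_ncard_iff hAfin).1 (by
    by_contra hc
    omega)
  have hrA := SegreFive.two_le_rk ha hb hab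
  have hrS := SegreFive.two_le_rk (hAS ha) (hAS hb) hab
  by_cases hA5 : A.ncard = 5
  · have hAS' : A = S := Set.eq_of_subset_of_ncard_le hAS (by omega) hSfin
    subst hAS'
    by_cases h3 : SegreFive.rk A = 2
    · left
      exact ⟨by omega, rfl, SegreFive.line_conclusion hAfin h3 (by omega)⟩
    · right
      have h2 : SegreFive.rk A = 3 := by omega
      have P : SegreFive.Plane A := ⟨hAfin, hA5, h2.le, fun A' hA' hr => by
        have h1 := hker A' hA'
        have h2 := he A'
        omega⟩
      rcases P.conclusion h2 with h | h
      · exact Or.inl ⟨by omega, rfl, h⟩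
      · exact Or.inr (Or.inl ⟨by omega, rfl, h⟩)
  · right; right; right
    exact ⟨by omega, by omega, SegreFive.line_conclusion hAfin (by omega) (by omega)⟩
end
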